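/- Assume in addition that κ₁(s) = 0 for all s ∈ I (the ruled surface is developable) and that τ₁(s) ≠ 0 for all s ∈ I. Then the striction curve σ is a regular space curve (σ'(s) ≠ 0 for all s), its curvature satisfies |σ'(s) × σ''(s)| / |σ'(s)|³ = 1/|τ₁(s)|, and its torsion satisfies det(σ'(s), σ''(s), σ'''(s)) / |σ'(s) × σ''(s)|² = τ₀(s)/τ₁(s) for all s ∈ I. -/

import Mathlib

noncomputable section
open scoped RealInnerProductSpace

/-- Euclidean 3-space `ℝ³`. -/
abbrev E3 : Type := EuclideanSpace ℝ (Fin 3)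

/-- The cross product on `E3`. -/
def cross (u v : E3) : E3 :=
  (WithLp.equiv 2 (Fin 3 → ℝ)).symm
    ![u 1 * v 2 - u 2 * v 1, u 2 * v 0 - u 0 * v 2, u 0 * v 1 - u 1 * v 0]

/-- Determinant of the 3×3 matrix with columns `u`, `v`, `w`. -/
def det3 (u v w : E3) : ℝ :=
  Matrix.det !![u 0, v 0, w 0; u 1, v 1, w 1; u 2, v 2, w 2]

namespace Ruled

/-- The director curve `e = v₀`. -/
def e (v₀ : ℝ → E3) : ℝ → E3 := v₀

/-- The base curve `r = v₀ × v₁`. -/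
def r (v₀ v₁ : ℝ → E3) : ℝ → E3 := fun s => cross (v₀ s) (v₁ s)

/-- The parametrization `F(s,t) = r(s) + t • e(s)` of the ruled surface. -/
def F (v₀ v₁ : ℝ → E3) (s t : ℝ) : E3 := r v₀ v₁ s + t • v₀ s

/-- `n₀ = v₀'`. -/
def n₀ (v₀ : ℝ → E3) : ℝ → E3 := fun s => deriv v₀ s

/-- `κ₁ = ⟪v₀', v₁'⟫`, the ε-part of the dual curvature. -/
def κ₁ (v₀ v₁ : ℝ → E3) : ℝ → ℝ := fun s => ⟪deriv v₀ s, deriv v₁ s⟫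

/-- `n₁ = v₁' - κ₁ • v₀'`. -/
def n₁ (v₀ v₁ : ℝ → E3) : ℝ → E3 := fun s => deriv v₁ s - κ₁ v₀ v₁ s • deriv v₀ s

/-- `t₀ = v₀ × n₀`. -/
def t₀ (v₀ : ℝ → E3) : ℝ → E3 := fun s => cross (v₀ s) (n₀ v₀ s)

/-- `t₁ = v₀ × n₁ + v₁ × n₀`. -/
def t₁ (v₀ v₁ : ℝ → E3) : ℝ → E3 :=
  fun s => cross (v₀ s) (n₁ v₀ v₁ s) + cross (v₁ s) (n₀ v₀ s)

/-- `τ₀ = ⟪n₀', t₀⟫`, the real part of the dual torsion. -/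
def τ₀ (v₀ : ℝ → E3) : ℝ → ℝ := fun s => ⟪deriv (n₀ v₀) s, t₀ v₀ s⟫

/-- `τ₁ = ⟪n₀', t₁⟫ + ⟪n₁', t₀⟫`, the ε-part of the dual torsion. -/
def τ₁ (v₀ v₁ : ℝ → E3) : ℝ → ℝ :=
  fun s => ⟪deriv (n₀ v₀) s, t₁ v₀ v₁ s⟫ + ⟪deriv (n₁ v₀ v₁) s, t₀ v₀ s⟫

/-- The striction curve `σ(s) = r(s) - ⟪r'(s), e'(s)⟫ • e(s)`. -/
def strict (v₀ v₁ : ℝ → E3) : ℝ → E3 :=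
  fun s => r v₀ v₁ s - ⟪deriv (r v₀ v₁) s, deriv (e v₀) s⟫ • e v₀ s

end Ruled

open Ruled


theorem cross_z (u v : E3) : cross u v 0 = u 1 * v 2 - u 2 * v 1 := by simp [cross]
theorem cross_o (u v : E3) : cross u v 1 = u 2 * v 0 - u 0 * v 2 := by simp [cross]
theorem cross_t (u v : E3) : cross u v 2 = u 0 * v 1 - u 1 * v 0 := by simp [cross]

theorem inner_co (u v : E3) : ⟪u, v⟫ = u 0 * v 0 + u 1 * v 1 + u 2 * v 2 := by
  simp [PiLp.inner_apply, Fin.sum_univ_three]; ring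

theorem E3_ext {u v : E3} (h0 : u 0 = v 0) (h1 : u 1 = v 1) (h2 : u 2 = v 2) : u = v := by
  ext i; fin_cases i <;> assumption

theorem hasDerivAt_co {f : ℝ → E3} {f' : E3} {s : ℝ} (h : HasDerivAt f f' s) (i : Fin 3) :
    HasDerivAt (fun x => f x i) (f' i) s := by
  have := (EuclideanSpace.proj (𝕜 := ℝ) i : E3 →L[ℝ] ℝ).hasFDerivAt.comp_hasDerivAt s h
  exact this

theorem hasDerivAt_of_co {f : ℝ → E3} {f' : E3} {s : ℝ}
    (h : ∀ i, HasDerivAt (fun x => f x i) (f' i) s) : HasDerivAt f f' s := by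
  rw [hasDerivAt_iff_hasFDerivAt, ← hasFDerivWithinAt_univ, hasFDerivWithinAt_euclidean]
  intro i
  have := (h i).hasFDerivAt.hasFDerivWithinAt (s := Set.univ)
  have hE : PiLp.proj 2 (fun _ => ℝ) i ∘SL ContinuousLinearMap.toSpanSingleton ℝ f' =
      ContinuousLinearMap.toSpanSingleton ℝ (f' i) := by
    ext; simp
  exact hE ▸ this

theorem hasDerivAt_cross {f g : ℝ → E3} {f' g' : E3} {s : ℝ} (hf : HasDerivAt f f' s)
    (hg : HasDerivAt g g' s) :
    HasDerivAt (fun x => cross (f x) (g x)) (cross f' (g s) + cross (f s) g') s := by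
  apply hasDerivAt_of_co
  have F := hasDerivAt_co hf
  have G := hasDerivAt_co hg
  intro i
  fin_cases i
  · simp only [Fin.zero_eta, PiLp.add_apply, cross_z]
    refine (((F 1).mul (G 2)).sub ((F 2).mul (G 1))).congr_deriv ?_
    ring
  · simp only [Fin.mk_one, PiLp.add_apply, cross_o]
    refine (((F 2).mul (G 0)).sub ((F 0).mul (G 2))).congr_deriv ?_
    ring
  · simp only [Fin.reduceFinMk, PiLp.add_apply, cross_t]
    refine (((F 0).mul (G 1)).sub ((F 1).mul (G 0))).congr_deriv ?_
    ring

theorem contDiffOn_cross {f g : ℝ → E3} {I : Set ℝ} (hf : ContDiffOn ℝ (⊤ : ℕ∞) f I)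
    (hg : ContDiffOn ℝ (⊤ : ℕ∞) g I) :
    ContDiffOn ℝ (⊤ : ℕ∞) (fun x => cross (f x) (g x)) I := by
  rw [contDiffOn_euclidean] at *
  intro i
  fin_cases i
  · simp only [Fin.zero_eta, cross_z]
    exact ((hf 1).mul (hg 2)).sub ((hf 2).mul (hg 1))
  · simp only [Fin.mk_one, cross_o]
    exact ((hf 2).mul (hg 0)).sub ((hf 0).mul (hg 2))
  · simp only [Fin.reduceFinMk, cross_t]
    exact ((hf 0).mul (hg 1)).sub ((hf 1).mul (hg 0))

theorem contDiffOn_dv {f : ℝ → E3} {I : Set ℝ} (hI : IsOpen I)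
    (hf : ContDiffOn ℝ (⊤ : ℕ∞) f I) : ContDiffOn ℝ (⊤ : ℕ∞) (deriv f) I :=
  hf.deriv_of_isOpen hI (by simp)

theorem hasDerivAt_of_cd {F : Type*} [NormedAddCommGroup F] [NormedSpace ℝ F]
    {f : ℝ → F} {I : Set ℝ} (hI : IsOpen I)
    (hf : ContDiffOn ℝ (⊤ : ℕ∞) f I) {s : ℝ} (hs : s ∈ I) : HasDerivAt f (deriv f s) s :=
  ((hf.differentiableOn (by simp)).differentiableAt (hI.mem_nhds hs)).hasDerivAt

/-- inner products of `cross`es -/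
theorem inner_cross_cross (a b c d : E3) :
    ⟪cross a b, cross c d⟫ = ⟪a, c⟫ * ⟪b, d⟫ - ⟪a, d⟫ * ⟪b, c⟫ := by
  simp only [inner_co, cross_z, cross_o, cross_t]; ring

theorem frame_expand (p q w : E3) (hp : ⟪p, p⟫ = 1) (hq : ⟪q, q⟫ = 1) (hpq : ⟪p, q⟫ = 0) :
    w = ⟪w, p⟫ • p + ⟪w, q⟫ • q + ⟪w, cross p q⟫ • cross p q := by
  have key : (⟪p, p⟫ * ⟪q, q⟫ - ⟪p, q⟫ * ⟪p, q⟫) • w =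
      (⟪w, p⟫ * ⟪q, q⟫ - ⟪w, q⟫ * ⟪p, q⟫) • p + (⟪w, q⟫ * ⟪p, p⟫ - ⟪w, p⟫ * ⟪p, q⟫) • q
        + ⟪w, cross p q⟫ • cross p q := by
    apply E3_ext <;>
    simp only [inner_co, cross_z, cross_o, cross_t, PiLp.add_apply, PiLp.smul_apply, smul_eq_mul]
      <;> ring
  rw [hp, hq, hpq] at key
  simpa using key

/-- the algebraic identity behind `σ' = τ₁ v₀` -/
theorem alg_key (p q x v w : E3) (hp : ⟪p, p⟫ = 1) (hq : ⟪q, q⟫ = 1) (hpq : ⟪p, q⟫ = 0)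
    (hpv : ⟪p, v⟫ = 0) (hqv : ⟪q, w⟫ = 0) (hpx : ⟪x, p⟫ = -1) (hqx : ⟪x, q⟫ = 0) :
    cross q v + cross p w + ⟪w, cross p q⟫ • q = ⟪x, cross v q⟫ • p ∧
    ⟪x, cross p w⟫ = 0 ∧ ⟪w, cross p x⟫ = 0 := by
  have hqp : ⟪q, p⟫ = 0 := by rw [real_inner_comm]; exact hpq
  have h3 : ⟪v, p⟫ = 0 := by rw [real_inner_comm]; exact hpv
  have h4 : ⟪w, q⟫ = 0 := by rw [real_inner_comm]; exact hqv
  have z1 : ∀ u, ⟪p, cross p u⟫ = 0 := fun u => by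
    simp only [inner_co, cross_z, cross_o, cross_t]; ring
  have z2 : ∀ u, ⟪q, cross u q⟫ = 0 := fun u => by
    simp only [inner_co, cross_z, cross_o, cross_t]; ring
  have hx := frame_expand p q x hp hq hpq
  rw [hpx, hqx] at hx
  generalize ⟪x, cross p q⟫ = τ at hx
  have h2 : ⟪x, cross p w⟫ = 0 := by
    rw [hx]
    simp [inner_add_left, inner_smul_left, inner_cross_cross, hqp, hqv, z1]
  refine ⟨?_, h2, ?_⟩
  · have e1 : ⟪x, cross v q⟫ = ⟪p, cross q v⟫ := by
      have : ⟪p, cross q v⟫ = - ⟪p, cross v q⟫ := by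
        simp only [inner_co, cross_z, cross_o, cross_t]; ring
      rw [hx, this]
      simp [inner_add_left, inner_smul_left, inner_cross_cross, hpq, hpv]
    rw [e1, frame_expand p q (cross q v + cross p w + ⟪w, cross p q⟫ • q) hp hq hpq]
    have a1 : ⟪cross q v + cross p w + ⟪w, cross p q⟫ • q, p⟫ = ⟪p, cross q v⟫ := by
      rw [inner_add_left, inner_add_left, real_inner_smul_left, hqp]
      simp only [inner_co, cross_z, cross_o, cross_t]; ring
    have a2 : ⟪cross q v + cross p w + ⟪w, cross p q⟫ • q, q⟫ = 0 := by
      rw [inner_add_left, inner_add_left, real_inner_smul_left, hq]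
      simp only [inner_co, cross_z, cross_o, cross_t]; ring
    have a3 : ⟪cross q v + cross p w + ⟪w, cross p q⟫ • q, cross p q⟫ = 0 := by
      simp [inner_add_left, inner_smul_left, inner_cross_cross, hqp, hpq, z2, h3, h4]
    rw [a1, a2, a3]; simp
  · have : ⟪w, cross p x⟫ = - ⟪x, cross p w⟫ := by
      simp only [inner_co, cross_z, cross_o, cross_t]; ring
    rw [this, h2, neg_zero]

theorem inner_self_of_norm {u : E3} (h : ‖u‖ = 1) : ⟪u, u⟫ = 1 := by
  rw [real_inner_self_eq_norm_sq, h]; norm_num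

theorem deriv_inner_const {f g : ℝ → E3} {I : Set ℝ} (hI : IsOpen I)
    (hf : ContDiffOn ℝ (⊤ : ℕ∞) f I) (hg : ContDiffOn ℝ (⊤ : ℕ∞) g I) (c : ℝ)
    (h : ∀ s ∈ I, ⟪f s, g s⟫ = c) {s : ℝ} (hs : s ∈ I) :
    ⟪f s, deriv g s⟫ + ⟪deriv f s, g s⟫ = 0 := by
  have h1 := (hasDerivAt_of_cd hI hf hs).inner ℝ (hasDerivAt_of_cd hI hg hs)
  have h2 : (fun t => ⟪f t, g t⟫) =ᶠ[nhds s] fun _ => c := by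
    filter_upwards [hI.mem_nhds hs] with t ht using h t ht
  exact h1.unique ((hasDerivAt_const s c).congr_of_eventuallyEq h2)

theorem norm_of_inner_self {u : E3} (h : ⟪u, u⟫ = 1) : ‖u‖ = 1 := by
  rw [real_inner_self_eq_norm_sq] at h
  nlinarith [norm_nonneg u]

theorem final_alg (p q x : E3) (g h k : ℝ) (hp : ⟪p, p⟫ = 1) (hq : ⟪q, q⟫ = 1)
    (hpq : ⟪p, q⟫ = 0) (hg : g ≠ 0) :
    g • p ≠ 0 ∧ ‖cross (g • p) (g • q + h • p)‖ / ‖g • p‖ ^ 3 = 1 / |g| ∧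
    det3 (g • p) (g • q + h • p) (g • x + h • q + (h • q + k • p)) /
      ‖cross (g • p) (g • q + h • p)‖ ^ 2 = ⟪x, cross p q⟫ / g := by
  have hpn : ‖p‖ = 1 := norm_of_inner_self hp
  have hc : cross (g • p) (g • q + h • p) = (g ^ 2) • cross p q := by
    apply E3_ext <;>
    simp only [cross_z, cross_o, cross_t, PiLp.add_apply, PiLp.smul_apply, smul_eq_mul] <;> ring
  have hcn : ‖cross p q‖ = 1 := by
    apply norm_of_inner_self
    rw [inner_cross_cross, hp, hq, hpq]; ring
  have hd : det3 (g • p) (g • q + h • p) (g • x + h • q + (h • q + k • p))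
      = g ^ 3 * ⟪x, cross p q⟫ := by
    simp [det3, Matrix.det_fin_three, inner_co, cross_z, cross_o, cross_t]
    ring
  have hn : ‖g • p‖ = |g| := by rw [norm_smul, hpn, mul_one, Real.norm_eq_abs]
  have hn2 : ‖(g ^ 2) • cross p q‖ = g ^ 2 := by
    rw [norm_smul, hcn, mul_one, Real.norm_eq_abs, abs_of_nonneg (sq_nonneg g)]
  have hga : |g| ≠ 0 := abs_ne_zero.2 hg
  rw [hc, hd, hn, hn2]
  refine ⟨?_, ?_, ?_⟩
  · rw [← norm_ne_zero_iff, hn]; exact hga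
  · rw [← sq_abs]; field_simp
  · field_simp

/-- For a non-cylindrical developable surface with `τ₁ ≠ 0`, the striction curve is a
regular space curve with curvature `1/|τ₁|` and torsion `τ₀/τ₁`. -/
theorem striction_curve_curvature_torsion
    (I : Set ℝ) (v₀ v₁ : ℝ → E3)
    (hI : IsOpen I) (hI' : I.OrdConnected)
    (hv₀ : ContDiffOn ℝ (⊤ : ℕ∞) v₀ I) (hv₁ : ContDiffOn ℝ (⊤ : ℕ∞) v₁ I)
    (hunit : ∀ s ∈ I, ‖v₀ s‖ = 1) (horth : ∀ s ∈ I, ⟪v₀ s, v₁ s⟫ = 0)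
    (harc : ∀ s ∈ I, ‖deriv v₀ s‖ = 1)
    (hdev : ∀ s ∈ I, κ₁ v₀ v₁ s = 0) (hτ : ∀ s ∈ I, τ₁ v₀ v₁ s ≠ 0) :
    ∀ s ∈ I,
      deriv (strict v₀ v₁) s ≠ 0 ∧
      ‖cross (deriv (strict v₀ v₁) s) (deriv (deriv (strict v₀ v₁)) s)‖ /
          ‖deriv (strict v₀ v₁) s‖ ^ 3 = 1 / |τ₁ v₀ v₁ s| ∧
      det3 (deriv (strict v₀ v₁) s) (deriv (deriv (strict v₀ v₁)) s)
            (deriv (deriv (deriv (strict v₀ v₁))) s) /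
          ‖cross (deriv (strict v₀ v₁) s) (deriv (deriv (strict v₀ v₁)) s)‖ ^ 2 =
        τ₀ v₀ s / τ₁ v₀ v₁ s := by
  have hq := contDiffOn_dv hI hv₀
  have hx := contDiffOn_dv hI hq
  have hw := contDiffOn_dv hI hv₁
  have hw2 := contDiffOn_dv hI hw
  have hpp : ∀ s ∈ I, ⟪v₀ s, v₀ s⟫ = 1 := fun s hs => inner_self_of_norm (hunit s hs)
  have hqq : ∀ s ∈ I, ⟪deriv v₀ s, deriv v₀ s⟫ = 1 := fun s hs => inner_self_of_norm (harc s hs)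
  have hpq : ∀ s ∈ I, ⟪v₀ s, deriv v₀ s⟫ = 0 := fun s hs => by
    have h := deriv_inner_const hI hv₀ hv₀ 1 hpp hs
    have h' := real_inner_comm (v₀ s) (deriv v₀ s)
    linarith
  have hxq : ∀ s ∈ I, ⟪deriv (deriv v₀) s, deriv v₀ s⟫ = 0 := fun s hs => by
    have h := deriv_inner_const hI hq hq 1 hqq hs
    have h' := real_inner_comm (deriv (deriv v₀) s) (deriv v₀ s)
    linarith
  have hxp : ∀ s ∈ I, ⟪deriv (deriv v₀) s, v₀ s⟫ = -1 := fun s hs => by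
    have h := deriv_inner_const hI hv₀ hq 0 hpq hs
    have h' := real_inner_comm (deriv (deriv v₀) s) (v₀ s)
    linarith [hqq s hs]
  let g : ℝ → ℝ := fun s =>
    ⟪deriv (deriv v₀) s, cross (v₁ s) (deriv v₀ s)⟫ +
      ⟪deriv (deriv v₁) s, cross (v₀ s) (deriv v₀ s)⟫
  have hgs : ContDiffOn ℝ (⊤ : ℕ∞) g I :=
    (hx.inner ℝ (contDiffOn_cross hv₁ hq)).add (hw2.inner ℝ (contDiffOn_cross hv₀ hq))
  have hgs2 : ContDiffOn ℝ (⊤ : ℕ∞) (deriv g) I := hgs.deriv_of_isOpen hI (by simp)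
  have hdev2 : ∀ s ∈ I, ⟪deriv v₀ s, deriv v₁ s⟫ = 0 := hdev
  have halg := fun s (hs : s ∈ I) => alg_key (v₀ s) (deriv v₀ s) (deriv (deriv v₀) s) (v₁ s)
    (deriv v₁ s) (hpp s hs) (hqq s hs) (hpq s hs) (horth s hs) (hdev2 s hs) (hxp s hs) (hxq s hs)
  have hτg : ∀ s ∈ I, τ₁ v₀ v₁ s = g s := fun s hs => by
    have hn : n₁ v₀ v₁ =ᶠ[nhds s] deriv v₁ := by
      filter_upwards [hI.mem_nhds hs] with t ht
      simp [n₁, hdev t ht]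
    have h0 : n₀ v₀ = deriv v₀ := rfl
    simp only [τ₁, t₁, t₀, hn.deriv_eq, hn.self_of_nhds, h0, inner_add_right, (halg s hs).2.1, g]
    ring
  have hσ : ∀ s ∈ I, strict v₀ v₁ s =
      cross (v₀ s) (v₁ s) + ⟪deriv v₁ s, cross (v₀ s) (deriv v₀ s)⟫ • v₀ s := fun s hs => by
    have hr : deriv (r v₀ v₁) s = _ :=
      (hasDerivAt_cross (hasDerivAt_of_cd hI hv₀ hs) (hasDerivAt_of_cd hI hv₁ hs)).deriv
    simp only [strict, hr, e]
    have : ⟪cross (deriv v₀ s) (v₁ s) + cross (v₀ s) (deriv v₁ s), deriv v₀ s⟫ =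
        - ⟪deriv v₁ s, cross (v₀ s) (deriv v₀ s)⟫ := by
      simp only [inner_co, cross_z, cross_o, cross_t, PiLp.add_apply]; ring
    rw [this, neg_smul, sub_neg_eq_add]; rfl
  have hσ1 : ∀ s ∈ I, deriv (strict v₀ v₁) s = g s • v₀ s := fun s hs => by
    have hev : strict v₀ v₁ =ᶠ[nhds s] fun s =>
        cross (v₀ s) (v₁ s) + ⟪deriv v₁ s, cross (v₀ s) (deriv v₀ s)⟫ • v₀ s := by
      filter_upwards [hI.mem_nhds hs] with t ht using hσ t ht
    rw [hev.deriv_eq]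
    have d0 := hasDerivAt_of_cd hI hv₀ hs
    have d1 := hasDerivAt_of_cd hI hv₁ hs
    have dq := hasDerivAt_of_cd hI hq hs
    have dw := hasDerivAt_of_cd hI hw hs
    have D := (hasDerivAt_cross d0 d1).add ((dw.inner ℝ (hasDerivAt_cross d0 dq)).smul d0)
    refine D.deriv.trans ?_
    obtain ⟨k1, -, k3⟩ := halg s hs
    have hz : cross (deriv v₀ s) (deriv v₀ s) = 0 := by
      apply E3_ext <;> simp only [cross_z, cross_o, cross_t, PiLp.zero_apply] <;> ring
    rw [hz, zero_add, k3, zero_add, ← add_assoc, k1, ← add_smul]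
  have hσ2 : ∀ s ∈ I, deriv (deriv (strict v₀ v₁)) s =
      g s • deriv v₀ s + deriv g s • v₀ s := fun s hs => by
    have hev : deriv (strict v₀ v₁) =ᶠ[nhds s] fun t => g t • v₀ t := by
      filter_upwards [hI.mem_nhds hs] with t ht using hσ1 t ht
    rw [hev.deriv_eq]
    exact ((hasDerivAt_of_cd hI hgs hs).smul (hasDerivAt_of_cd hI hv₀ hs)).deriv
  have hσ3 : ∀ s ∈ I, deriv (deriv (deriv (strict v₀ v₁))) s =
      g s • deriv (deriv v₀) s + deriv g s • deriv v₀ s +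
        (deriv g s • deriv v₀ s + deriv (deriv g) s • v₀ s) := fun s hs => by
    have hev : deriv (deriv (strict v₀ v₁)) =ᶠ[nhds s]
        fun t => g t • deriv v₀ t + deriv g t • v₀ t := by
      filter_upwards [hI.mem_nhds hs] with t ht using hσ2 t ht
    rw [hev.deriv_eq]
    exact (((hasDerivAt_of_cd hI hgs hs).smul (hasDerivAt_of_cd hI hq hs)).add
      ((hasDerivAt_of_cd hI hgs2 hs).smul (hasDerivAt_of_cd hI hv₀ hs))).deriv
  intro s hs
  rw [hσ1 s hs, hσ2 s hs, hσ3 s hs, hτg s hs]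
  exact final_alg (v₀ s) (deriv v₀ s) (deriv (deriv v₀) s) (g s) (deriv g s) (deriv (deriv g) s)
    (hpp s hs) (hqq s hs) (hpq s hs) (hτg s hs ▸ hτ s hs)
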